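/- For all n ≥ 1, T > 0, C₁, C₂, M, Λ > 0 there exists C > 0 with the following property. Let g = (g^{αβ}) be a C¹ field of symmetric n×n matrices on an open neighborhood of [−T,T] × ℝⁿ with C₁·Id ≤ g ≤ C₂·Id and all first-order partial derivatives of the g^{αβ} bounded by M; let b⁰,…,bⁿ, c be measurable and bounded by M; let f be continuous and square integrable on [−T,T] × ℝⁿ; let φ : ℝⁿ → ℝ be Lipschitz with constant at most Λ, with −T < φ(x) < T for all x, and characteristic: Σ g^{αβ}(φ(x),x) ∂_αφ(x) ∂_βφ(x) = 1 for almost every x; let v be C² on a neighborhood of [−T,T] × ℝⁿ, vanishing for |x| ≥ R for some R, and satisfying ∂_t²v − Σ g^{αβ}∂_α∂_β v + b⁰∂_t v + Σ b^α∂_α v + c v = f. Then, with w(x) := v(φ(x),x) and ∇w its almost-everywhere gradient, for every s ∈ [−T,T]: E(s,v) ≤ C·(∫_{ℝⁿ} (w(x)² + |∇w(x)|²) dx + ∫∫_{[−T,T]×ℝⁿ} f(t,x)² dt dx). -/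

import Mathlib

open MeasureTheory

/-- Time partial derivative `∂_t u` of a function on `ℝ × ℝⁿ`. -/
noncomputable def Dt {n : ℕ} (u : ℝ × (Fin n → ℝ) → ℝ) (p : ℝ × (Fin n → ℝ)) : ℝ :=
  fderiv ℝ u p (1, 0)

/-- Spatial partial derivative `∂_α u` of a function on `ℝ × ℝⁿ`. -/
noncomputable def Dx {n : ℕ} (α : Fin n) (u : ℝ × (Fin n → ℝ) → ℝ)
    (p : ℝ × (Fin n → ℝ)) : ℝ :=
  fderiv ℝ u p (0, Pi.single α 1)

/-- The energy at time `t` of `v` for the time-dependent metric `g`. -/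
noncomputable def energy {n : ℕ} (g : Fin n → Fin n → ℝ × (Fin n → ℝ) → ℝ)
    (v : ℝ × (Fin n → ℝ) → ℝ) (t : ℝ) : ℝ :=
  ∫ x : Fin n → ℝ,
    ((Dt v (t, x)) ^ 2 + (∑ α, ∑ β, g α β (t, x) * Dx α v (t, x) * Dx β v (t, x))
      + (v (t, x)) ^ 2)

/-!
Multiplying the wave equation by `2 ∂_t v` shows that the energy density `e` and the flux
`Y^α = 2 ∂_t v g^{αβ} ∂_β v` satisfy `∂_t e - ∂_α Y^α = O(e + f²)`. The divergence theorem between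
the graph of `φ` and the slice `t = s`, with an exponential weight absorbing the `O(e)` term, bounds
the energy at time `s` by the flux `e + Y · ∇φ` through the graph and `∫∫ f²`. On a null graph this
flux is `|∇w|_g² + w²`: the transversal derivative of `v` drops out, and only the trace is left.

Since the graph may cross the slice, the divergence theorem is applied to the graphs of `min φ s`
and `max φ s`; the crossing set `{φ = s}` is null because `∇φ ≠ 0` almost everywhere.
-/

open Filter Set Topology

theorem norm_fderiv_apply_le_of_lipschitz {E : Type*} [NormedAddCommGroup E] [NormedSpace ℝ E]
    {u : E → ℝ} {K : NNReal} (hu : LipschitzWith K u) (x e : E) :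
    ‖fderiv ℝ u x e‖ ≤ K * ‖e‖ :=
  (fderiv ℝ u x).le_of_opNorm_le (norm_fderiv_le_of_lipschitz ℝ hu) e

section LipschitzFunctions

variable {E : Type*} [NormedAddCommGroup E] [NormedSpace ℝ E] [FiniteDimensional ℝ E]
  [MeasurableSpace E] [BorelSpace E] (μ : Measure E) [μ.IsAddHaarMeasure]

theorem integral_fderiv_apply_eq_zero {u : E → ℝ} {K : NNReal} (hu : LipschitzWith K u)
    (hc : HasCompactSupport u) (e : E) : ∫ x, fderiv ℝ u x e ∂μ = 0 := by
  have hline : ∫ x, lineDeriv ℝ u x e ∂μ = 0 := by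
    have h := (LipschitzWith.const (1 : ℝ)).integral_lineDeriv_mul_eq (μ := μ) hu hc (-e)
    simpa [lineDeriv] using h.symm
  rw [← hline]
  refine integral_congr_ae ?_
  filter_upwards [hu.ae_differentiableAt (μ := μ)] with x hx
  exact hx.lineDeriv_eq_fderiv.symm

-- `x ↦ u x • e` with `e ≠ 0` is constant on the level set, so its derivative vanishes a.e. there.
theorem ae_ne_of_ae_fderiv_ne_zero {u : E → ℝ} (hu : Measurable u)
    (hne : ∀ᵐ x ∂μ, fderiv ℝ u x ≠ 0) (s : ℝ) : ∀ᵐ x ∂μ, u x ≠ s := by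
  cases subsingleton_or_nontrivial E
  · filter_upwards [hne] with x hx
    exact absurd (Subsingleton.elim _ _) hx
  obtain ⟨e, he⟩ := exists_ne (0 : E)
  let S : Set E := {x | u x = s ∧ DifferentiableAt ℝ u x}
  have hS : MeasurableSet S :=
    (measurableSet_eq_fun hu measurable_const).inter (measurableSet_of_differentiableAt ℝ u)
  have hconst : ApproximatesLinearOn (fun x => u x • e) (0 : E →L[ℝ] E) S 0 := by
    intro x hx y hy
    simp [hx.1, hy.1]
  have hzero := hconst.norm_fderiv_sub_le μ hS (fun x => (fderiv ℝ u x).smulRight e)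
    (fun x hx => (hx.2.hasFDerivAt.smul_const e).hasFDerivWithinAt)
  rw [ae_restrict_iff' hS] at hzero
  filter_upwards [hzero, hne] with x hx hne' hxs
  have hdiff : DifferentiableAt ℝ u x := not_imp_comm.1 fderiv_zero_of_not_differentiableAt hne'
  have h0 : fderiv ℝ u x = 0 ∨ e = 0 := by simpa using hx ⟨hxs, hdiff⟩
  exact h0.elim hne' he

end LipschitzFunctions

theorem norm_intervalIntegral_le_of_support_subset {F : Type*} [NormedAddCommGroup F]
    [NormedSpace ℝ F] {h : ℝ → F} {C : ℝ} {S : Set ℝ} (hS : MeasurableSet S)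
    (hSfin : volume S < ⊤) (hsupp : Function.support h ⊆ S) (hC : ∀ t, ‖h t‖ ≤ C) (a b : ℝ) :
    ‖∫ t in a..b, h t‖ ≤ C * volume.real S := by
  have hC0 : 0 ≤ C := (norm_nonneg _).trans (hC 0)
  have hfin : volume (uIoc a b ∩ S) < ⊤ := (measure_mono inter_subset_right).trans_lt hSfin
  calc ‖∫ t in a..b, h t‖ = ‖∫ t in uIoc a b ∩ S, h t‖ := by
        rw [intervalIntegral.norm_intervalIntegral_eq, ← setIntegral_indicator hS,
          indicator_eq_self.2 hsupp]
    _ ≤ C * volume.real (uIoc a b ∩ S) := norm_setIntegral_le_of_norm_le_const hfin fun t _ => hC t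
    _ ≤ C * volume.real S := by
        gcongr
        · exact hSfin.ne
        · exact inter_subset_right

theorem hasCompactSupport_of_forall_slice_eq_zero {E F : Type*} [TopologicalSpace E] [R1Space E]
    [Zero F] {X : ℝ × E → F} (hX : HasCompactSupport X) {u : E → F}
    (hu : ∀ x, (∀ t, X (t, x) = 0) → u x = 0) : HasCompactSupport u :=
  HasCompactSupport.intro (hX.isCompact.image continuous_snd) fun x hx =>
    hu x fun t => image_eq_zero_of_notMem_tsupport fun ht => hx ⟨(t, x), ht, rfl⟩

theorem intervalIntegrable_slice {E F : Type*} [TopologicalSpace E] [NormedAddCommGroup F]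
    {X : ℝ × E → F} (hX : Continuous X) (x : E) (a b : ℝ) :
    IntervalIntegrable (fun t => X (t, x)) volume a b :=
  Continuous.intervalIntegrable (by fun_prop) a b

section TailIntegral

variable {E F : Type*} [NormedAddCommGroup F] [NormedSpace ℝ F]

/-- The primitive `(τ, x) ↦ ∫_τ^σ X(t, x) dt` of `-X` in the first variable. Composed with
`x ↦ (ψ x, x)` it gives the integrals of `X` over the segments joining the graph of `ψ` to the
slice `t = σ`. -/
noncomputable def tailIntegral (X : ℝ × E → F) (σ : ℝ) (p : ℝ × E) : F :=
  ∫ t in p.1..σ, X (t, p.2)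

theorem continuous_tailIntegral [TopologicalSpace E] {X : ℝ × E → F} (hX : Continuous X) (σ : ℝ) :
    Continuous (tailIntegral X σ) := by
  have h := intervalIntegral.continuous_parametric_intervalIntegral_of_continuous (μ := volume)
    (f := fun (p : ℝ × E) t => X (t, p.2)) (a₀ := σ)
    (hX.comp (by fun_prop : Continuous fun q : (ℝ × E) × ℝ => (q.2, q.1.2))) continuous_fst
  exact h.neg.congr fun p => (intervalIntegral.integral_symm _ _).symm

variable [NormedAddCommGroup E]

theorem exists_lipschitzWith_tailIntegral {X : ℝ × E → F} {L : NNReal} (hL : LipschitzWith L X)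
    (hc : HasCompactSupport X) (σ : ℝ) : ∃ K, LipschitzWith K (tailIntegral X σ) := by
  obtain ⟨B, hB⟩ := hc.exists_bound_of_continuous hL.continuous
  have hB0 : 0 ≤ B := (norm_nonneg _).trans (hB 0)
  have hint := intervalIntegrable_slice hL.continuous
  have htime : ∀ x, LipschitzWith B.toNNReal fun τ => tailIntegral X σ (τ, x) := fun x => by
    refine LipschitzWith.of_dist_le_mul fun τ τ' => ?_
    simp only [tailIntegral, dist_eq_norm, Real.coe_toNNReal B hB0,
      intervalIntegral.integral_interval_sub_interval_comm' (hint x τ σ) (hint x τ' σ)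
        (hint x τ τ'), intervalIntegral.integral_same, zero_sub, norm_neg]
    exact intervalIntegral.norm_integral_le_of_norm_le_const fun t _ => hB _
  set S : Set ℝ := Prod.fst '' tsupport X
  have hS : IsCompact S := hc.isCompact.image continuous_fst
  have hXS : ∀ t ∉ S, ∀ x, X (t, x) = 0 := fun t ht x =>
    image_eq_zero_of_notMem_tsupport fun h => ht ⟨(t, x), h, rfl⟩
  have hspace : ∀ τ, LipschitzWith (L * (volume.real S).toNNReal)
      fun x => tailIntegral X σ (τ, x) := fun τ => by
    refine LipschitzWith.of_dist_le_mul fun x y => ?_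
    rw [dist_eq_norm, tailIntegral, tailIntegral,
      ← intervalIntegral.integral_sub (hint x _ _) (hint y _ _), NNReal.coe_mul,
      Real.coe_toNNReal _ measureReal_nonneg, mul_right_comm]
    refine norm_intervalIntegral_le_of_support_subset hS.measurableSet hS.measure_lt_top
      (fun t ht => by_contra fun h => ht ?_) (fun t => ?_) τ σ
    · simp [hXS t h]
    · simpa [Prod.dist_eq, dist_eq_norm] using hL.dist_le_mul (t, x) (t, y)
  exact ⟨_, LipschitzWith.uncurry (f := fun τ x => tailIntegral X σ (τ, x)) htime hspace⟩

variable [NormedSpace ℝ E]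

theorem hasFDerivAt_tailIntegral_space {X : ℝ × E → F} {L : NNReal} (hX : ContDiff ℝ 1 X)
    (hL : LipschitzWith L X) (σ : ℝ) (p : ℝ × E) :
    HasFDerivAt (fun x => tailIntegral X σ (p.1, x))
      (tailIntegral (fun q => (fderiv ℝ X q).comp (.inr ℝ ℝ E)) σ p) p.2 := by
  have hX' : Continuous (fderiv ℝ X) := hX.continuous_fderiv one_ne_zero
  refine intervalIntegral.hasFDerivAt_integral_of_dominated_of_fderiv_le
    (F := fun x t => X (t, x)) (F' := fun x t => (fderiv ℝ X (t, x)).comp (.inr ℝ ℝ E))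
    (bound := fun _ => L) univ_mem (.of_forall fun x => ?_)
    (intervalIntegrable_slice hX.continuous p.2 p.1 σ) ?_ (.of_forall fun t _ x _ => ?_)
    intervalIntegrable_const (.of_forall fun t _ x _ => ?_)
  · exact (hX.continuous.comp (Continuous.prodMk_left x)).aestronglyMeasurable
  · exact ((hX'.comp (Continuous.prodMk_left p.2)).clm_comp
      continuous_const).aestronglyMeasurable
  · calc ‖(fderiv ℝ X (t, x)).comp (.inr ℝ ℝ E)‖
        ≤ ‖fderiv ℝ X (t, x)‖ * ‖ContinuousLinearMap.inr ℝ ℝ E‖ :=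
          ContinuousLinearMap.opNorm_comp_le _ _
      _ ≤ L * 1 := by
          gcongr
          · exact norm_fderiv_le_of_lipschitz ℝ hL
          · exact ContinuousLinearMap.norm_inr_le_one ℝ ℝ E
      _ = L := mul_one _
  · exact (hX.differentiable one_ne_zero _).hasFDerivAt.comp x (hasFDerivAt_prodMk_right t x)

theorem hasFDerivAt_tailIntegral [CompleteSpace F] {X : ℝ × E → F} {L : NNReal}
    (hX : ContDiff ℝ 1 X) (hL : LipschitzWith L X) (σ : ℝ) (p : ℝ × E) :
    HasFDerivAt (tailIntegral X σ)
      ((ContinuousLinearMap.toSpanSingleton ℝ (-X p)).coprod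
        (tailIntegral (fun q => (fderiv ℝ X q).comp (.inr ℝ ℝ E)) σ p)) p := by
  have hXc : Continuous X := hX.continuous
  have hX' : Continuous fun q => (fderiv ℝ X q).comp (.inr ℝ ℝ E) :=
    (hX.continuous_fderiv one_ne_zero).clm_comp continuous_const
  refine (hasStrictFDerivAt_uncurry_coprod (f := fun τ x => tailIntegral X σ (τ, x))
    (f₁ := fun τ x => ContinuousLinearMap.toSpanSingleton ℝ (-X (τ, x)))
    (f₂ := fun τ x => tailIntegral (fun q => (fderiv ℝ X q).comp (.inr ℝ ℝ E)) σ (τ, x))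
    (.of_forall fun q => ?_) (.of_forall fun q => hasFDerivAt_tailIntegral_space hX hL σ q)
    ?_ (continuous_tailIntegral hX' σ).continuousAt).hasFDerivAt
  · have hq : Continuous fun t => X (t, q.2) := by fun_prop
    exact (intervalIntegral.integral_hasDerivAt_left (hq.intervalIntegrable _ _)
      (hq.stronglyMeasurableAtFilter _ _) hq.continuousAt).hasFDerivAt
  · exact (ContinuousLinearMap.toSpanSingletonCLE.continuous.comp hXc.neg).continuousAt

end TailIntegral

section GraphIntegrals

variable {E : Type*} [NormedAddCommGroup E] [MeasurableSpace E] [BorelSpace E]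
  {μ : Measure E} [IsFiniteMeasureOnCompacts μ] {X : ℝ × E → ℝ} {ψ : E → ℝ} {Λ : NNReal}

theorem integrable_comp_graph (hX : Continuous X) (hc : HasCompactSupport X) (hψ : Continuous ψ) :
    Integrable (fun x => X (ψ x, x)) μ :=
  Continuous.integrable_of_hasCompactSupport (by fun_prop)
    (hasCompactSupport_of_forall_slice_eq_zero hc fun _ hx => hx _)

theorem integrable_intervalIntegral_graph (hX : Continuous X) (hc : HasCompactSupport X)
    (hψ : Continuous ψ) (σ : ℝ) : Integrable (fun x => ∫ t in ψ x..σ, X (t, x)) μ :=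
  ((continuous_tailIntegral hX σ).comp (hψ.prodMk continuous_id)).integrable_of_hasCompactSupport
    (hasCompactSupport_of_forall_slice_eq_zero hc fun x hx => by simp [tailIntegral, hx])

variable [NormedSpace ℝ E]

theorem integrable_comp_graph_mul_fderiv [SecondCountableTopology E] (hX : Continuous X)
    (hc : HasCompactSupport X) (hψ : LipschitzWith Λ ψ) (e : E) :
    Integrable (fun x => X (ψ x, x) * fderiv ℝ ψ x e) μ :=
  (integrable_comp_graph hX hc hψ.continuous).mul_bdd
    (measurable_fderiv_apply_const ℝ ψ e).aestronglyMeasurable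
    (.of_forall fun x => norm_fderiv_apply_le_of_lipschitz hψ x e)

end GraphIntegrals

theorem integral_comp_graph_mul_fderiv {E : Type*} [NormedAddCommGroup E] [NormedSpace ℝ E]
    [FiniteDimensional ℝ E] [MeasurableSpace E] [BorelSpace E] {μ : Measure E}
    [μ.IsAddHaarMeasure] {X : ℝ × E → ℝ} {ψ : E → ℝ} {Λ : NNReal}
    (hX : ContDiff ℝ 1 X) (hc : HasCompactSupport X) (hψ : LipschitzWith Λ ψ) (σ : ℝ) (e : E) :
    ∫ x, X (ψ x, x) * fderiv ℝ ψ x e ∂μ = ∫ x, (∫ t in ψ x..σ, fderiv ℝ X (t, x) (0, e)) ∂μ := by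
  obtain ⟨L, hL⟩ := hX.lipschitzWith_of_hasCompactSupport hc one_ne_zero
  obtain ⟨K, hK⟩ := exists_lipschitzWith_tailIntegral hL hc σ
  have hX' : Continuous (fderiv ℝ X) := hX.continuous_fderiv one_ne_zero
  have hderiv : ∀ᵐ x ∂μ, fderiv ℝ (fun x => tailIntegral X σ (ψ x, x)) x e
      = (∫ t in ψ x..σ, fderiv ℝ X (t, x) (0, e)) - X (ψ x, x) * fderiv ℝ ψ x e := by
    filter_upwards [hψ.ae_differentiableAt] with x hx
    have h := (hasFDerivAt_tailIntegral hX hL σ (ψ x, x)).comp (f := fun x => (ψ x, x)) x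
      (hx.hasFDerivAt.prodMk (hasFDerivAt_id x))
    have hint := intervalIntegrable_slice
      (hX'.clm_comp continuous_const : Continuous fun q =>
        (fderiv ℝ X q).comp (ContinuousLinearMap.inr ℝ ℝ E)) x (ψ x) σ
    rw [show fderiv ℝ (fun x => tailIntegral X σ (ψ x, x)) x = _ from h.fderiv]
    simp only [tailIntegral, ContinuousLinearMap.comp_apply, ContinuousLinearMap.prod_apply,
      ContinuousLinearMap.id_apply, ContinuousLinearMap.coprod_apply,
      ContinuousLinearMap.toSpanSingleton_apply, ContinuousLinearMap.inr_apply, smul_eq_mul,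
      mul_neg, ContinuousLinearMap.intervalIntegral_apply hint]
    ring
  have hzero := integral_fderiv_apply_eq_zero μ (hK.comp (hψ.prodMk .id))
    (hasCompactSupport_of_forall_slice_eq_zero hc fun x hx => by simp [tailIntegral, hx]) e
  have hzero' := (integral_congr_ae hderiv).symm.trans hzero
  rw [integral_sub
    (integrable_intervalIntegral_graph (by fun_prop) (hc.fderiv_apply ℝ (0, e)) hψ.continuous σ)
    (integrable_comp_graph_mul_fderiv hX.continuous hc hψ e)] at hzero'
  exact (sub_eq_zero.1 hzero').symm

theorem exists_contDiff_hasCompactSupport_eventuallyEq {E : Type*} [NormedAddCommGroup E]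
    [NormedSpace ℝ E] [FiniteDimensional ℝ E] {k : ℕ∞} {K U : Set E} (hK : IsCompact K)
    (hU : IsOpen U) (hKU : K ⊆ U) {u : E → ℝ} (hu : ContDiffOn ℝ k u U) :
    ∃ w : E → ℝ, ContDiff ℝ k w ∧ HasCompactSupport w ∧ ∀ p ∈ K ∪ (tsupport u)ᶜ, w =ᶠ[𝓝 p] u := by
  obtain ⟨L, hL, hKL, hLU⟩ := exists_compact_between hK hU hKU
  obtain ⟨χ, hχ1, hχ0, -⟩ := exists_contMDiffMap_one_nhds_of_subset_interior
    (modelWithCornersSelf ℝ E) (n := k) hK.isClosed hKL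
  have htsupp : tsupport (fun p => χ p * u p) ⊆ L :=
    closure_minimal (fun p hp => by_contra fun h => hp (by simp [hχ0 p h])) hL.isClosed
  refine ⟨fun p => χ p * u p,
    (contMDiff_of_tsupport fun p hp => ContDiffAt.contMDiffAt ?_).contDiff,
    hL.of_isClosed_subset (isClosed_tsupport _) htsupp, ?_⟩
  · exact χ.contMDiff.contDiff.contDiffAt.mul (hu.contDiffAt (hU.mem_nhds (hLU (htsupp hp))))
  · rintro p (hp | hp)
    · filter_upwards [(eventually_nhdsSet_iff_forall.1 hχ1) p hp] with q hq
      simp [hq]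
    · filter_upwards [notMem_tsupport_iff_eventuallyEq.1 hp] with q hq
      simp [hq]

theorem eventuallyEq_zero_of_lt_norm_snd {E F : Type*} [NormedAddCommGroup E] [Zero F] {R : ℝ}
    {u : ℝ × E → F} (hu : ∀ t x, R < ‖x‖ → u (t, x) = 0) {p : ℝ × E} (hp : R < ‖p.2‖) :
    u =ᶠ[𝓝 p] 0 := by
  have hcont : Continuous fun q : ℝ × E => ‖q.2‖ := by fun_prop
  filter_upwards [hcont.continuousAt.eventually_const_lt hp] with q hq
  exact hu q.1 q.2 hq

theorem exists_contDiff_hasCompactSupport_eventuallyEq_slab {E : Type*} [NormedAddCommGroup E]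
    [NormedSpace ℝ E] [FiniteDimensional ℝ E] {k : ℕ∞} {a b R : ℝ} {U : Set (ℝ × E)}
    (hU : IsOpen U) (hslab : Icc a b ×ˢ univ ⊆ U) {u : ℝ × E → ℝ} (hu : ContDiffOn ℝ k u U)
    (hR : ∀ t x, R < ‖x‖ → u (t, x) = 0) :
    ∃ w : ℝ × E → ℝ, ContDiff ℝ k w ∧ HasCompactSupport w ∧
      ∀ p ∈ Icc a b ×ˢ univ, w =ᶠ[𝓝 p] u := by
  obtain ⟨w, hw, hwc, heq⟩ := exists_contDiff_hasCompactSupport_eventuallyEq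
    (isCompact_Icc.prod (isCompact_closedBall (0 : E) R)) hU
    ((prod_mono_right (subset_univ _)).trans hslab) hu
  refine ⟨w, hw, hwc, fun p hp => heq p ?_⟩
  rcases le_or_gt ‖p.2‖ R with hle | hlt
  · exact .inl ⟨hp.1, mem_closedBall_zero_iff.2 hle⟩
  · exact .inr (notMem_tsupport_iff_eventuallyEq.2 (eventuallyEq_zero_of_lt_norm_snd hR hlt))

section SpaceTime

variable {n : ℕ} {e : ℝ × (Fin n → ℝ) → ℝ} {Y : Fin n → ℝ × (Fin n → ℝ) → ℝ}
  {ψ : (Fin n → ℝ) → ℝ} {Λ : NNReal}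

theorem continuous_Dt (he : ContDiff ℝ 1 e) : Continuous (Dt e) :=
  (he.continuous_fderiv one_ne_zero).clm_apply continuous_const

theorem continuous_Dx (he : ContDiff ℝ 1 e) (α : Fin n) : Continuous (Dx α e) :=
  (he.continuous_fderiv one_ne_zero).clm_apply continuous_const

theorem intervalIntegral_Dt (he : ContDiff ℝ 1 e) (a b : ℝ) (x : Fin n → ℝ) :
    ∫ t in a..b, Dt e (t, x) = e (b, x) - e (a, x) := by
  refine intervalIntegral.integral_eq_sub_of_hasDerivAt (f := fun t => e (t, x)) (fun t _ => ?_)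
    (intervalIntegrable_slice (continuous_Dt he) x a b)
  exact (he.differentiable one_ne_zero (t, x)).hasFDerivAt.comp_hasDerivAt t
    ((hasDerivAt_id t).prodMk (hasDerivAt_const t x))

/-- The divergence `∂_t e - ∑ ∂_α Y^α` of the space-time vector field `(e, -Y)`. -/
noncomputable def spaceTimeDiv (e : ℝ × (Fin n → ℝ) → ℝ) (Y : Fin n → ℝ × (Fin n → ℝ) → ℝ)
    (p : ℝ × (Fin n → ℝ)) : ℝ :=
  Dt e p - ∑ α, Dx α (Y α) p

/-- The flux of the space-time vector field `(e, -Y)` through the graph `t = ψ(x)`, per unit of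
`dx` and along the conormal `(1, -∇ψ)`. -/
noncomputable def graphFlux (e : ℝ × (Fin n → ℝ) → ℝ) (Y : Fin n → ℝ × (Fin n → ℝ) → ℝ)
    (ψ : (Fin n → ℝ) → ℝ) (x : Fin n → ℝ) : ℝ :=
  e (ψ x, x) + ∑ α, Y α (ψ x, x) * fderiv ℝ ψ x (Pi.single α 1)

theorem graphFlux_congr {ψ' : (Fin n → ℝ) → ℝ} {x : Fin n → ℝ} (h : ψ =ᶠ[𝓝 x] ψ') :
    graphFlux e Y ψ x = graphFlux e Y ψ' x := by
  rw [graphFlux, graphFlux, h.fderiv_eq, h.self_of_nhds]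

theorem graphFlux_const (s : ℝ) (x : Fin n → ℝ) : graphFlux e Y (fun _ => s) x = e (s, x) := by
  simp [graphFlux]

theorem Dt_congr {u w : ℝ × (Fin n → ℝ) → ℝ} {p : ℝ × (Fin n → ℝ)} (h : u =ᶠ[𝓝 p] w) :
    Dt u p = Dt w p := by
  rw [Dt, Dt, h.fderiv_eq]

theorem Dx_congr {u w : ℝ × (Fin n → ℝ) → ℝ} {p : ℝ × (Fin n → ℝ)} (h : u =ᶠ[𝓝 p] w)
    (α : Fin n) : Dx α u p = Dx α w p := by
  rw [Dx, Dx, h.fderiv_eq]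

theorem spaceTimeDiv_congr {e' : ℝ × (Fin n → ℝ) → ℝ} {Y' : Fin n → ℝ × (Fin n → ℝ) → ℝ}
    {p : ℝ × (Fin n → ℝ)} (he : e' =ᶠ[𝓝 p] e) (hY : ∀ α, Y' α =ᶠ[𝓝 p] Y α) :
    spaceTimeDiv e' Y' p = spaceTimeDiv e Y p := by
  simp only [spaceTimeDiv, Dt_congr he, fun α => Dx_congr (hY α) α]

theorem continuous_spaceTimeDiv (he : ContDiff ℝ 1 e) (hY : ∀ α, ContDiff ℝ 1 (Y α)) :
    Continuous (spaceTimeDiv e Y) :=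
  (continuous_Dt he).sub (continuous_finsetSum _ fun α _ => continuous_Dx (hY α) α)

theorem hasCompactSupport_spaceTimeDiv (hec : HasCompactSupport e)
    (hYc : ∀ α, HasCompactSupport (Y α)) : HasCompactSupport (spaceTimeDiv e Y) := by
  have hsum : HasCompactSupport (∑ α, Dx α (Y α)) :=
    Finset.sum_induction _ HasCompactSupport (fun _ _ => HasCompactSupport.add) .zero
      fun α _ => (hYc α).fderiv_apply ℝ _
  have heq : spaceTimeDiv e Y = Dt e - ∑ α, Dx α (Y α) := by
    funext p
    simp [spaceTimeDiv]
  exact heq ▸ (hec.fderiv_apply ℝ (1, 0)).sub hsum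

theorem integrable_graphFlux (he : Continuous e) (hec : HasCompactSupport e)
    (hY : ∀ α, Continuous (Y α)) (hYc : ∀ α, HasCompactSupport (Y α)) (hψ : LipschitzWith Λ ψ) :
    Integrable (graphFlux e Y ψ) :=
  (integrable_comp_graph he hec hψ.continuous).add
    (integrable_finsetSum _ fun α _ => integrable_comp_graph_mul_fderiv (hY α) (hYc α) hψ _)

theorem integral_sub_graphFlux (he : ContDiff ℝ 1 e) (hec : HasCompactSupport e)
    (hY : ∀ α, ContDiff ℝ 1 (Y α)) (hYc : ∀ α, HasCompactSupport (Y α))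
    (hψ : LipschitzWith Λ ψ) (s : ℝ) :
    ∫ x, (e (s, x) - graphFlux e Y ψ x) = ∫ x, ∫ t in ψ x..s, spaceTimeDiv e Y (t, x) := by
  have hdiv : ∀ x, ∫ t in ψ x..s, spaceTimeDiv e Y (t, x)
      = (e (s, x) - e (ψ x, x)) - ∑ α, ∫ t in ψ x..s, Dx α (Y α) (t, x) := fun x => by
    have hDx := fun α => intervalIntegrable_slice (continuous_Dx (hY α) α) x (ψ x) s
    simp only [spaceTimeDiv]
    rw [intervalIntegral.integral_sub (intervalIntegrable_slice (continuous_Dt he) x _ _)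
      (intervalIntegrable_slice (continuous_finsetSum _ fun α _ => continuous_Dx (hY α) α) x _ _),
      intervalIntegral_Dt he, intervalIntegral.integral_finsetSum fun α _ => hDx α]
  have htime : Integrable fun x => e (s, x) - e (ψ x, x) :=
    (integrable_comp_graph he.continuous hec continuous_const).sub
      (integrable_comp_graph he.continuous hec hψ.continuous)
  have hgraph := fun α => integrable_comp_graph_mul_fderiv (μ := volume) (hY α).continuous
    (hYc α) hψ (Pi.single α 1)
  have hspace : ∀ α, Integrable fun x => ∫ t in ψ x..s, Dx α (Y α) (t, x) := fun α =>
    integrable_intervalIntegral_graph (continuous_Dx (hY α) α) ((hYc α).fderiv_apply ℝ _)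
      hψ.continuous s
  simp only [hdiv, graphFlux, ← sub_sub]
  rw [integral_sub htime (integrable_finsetSum _ fun α _ => hgraph α),
    integral_sub htime (integrable_finsetSum _ fun α _ => hspace α),
    integral_finsetSum _ fun α _ => hgraph α, integral_finsetSum _ fun α _ => hspace α]
  congr 1
  exact Finset.sum_congr rfl fun α _ => integral_comp_graph_mul_fderiv (hY α) (hYc α) hψ s _

/-- The field `u` multiplied by `exp (k (s - t))`, which is `1` on the slice `t = s`; a suitable
`k` absorbs the zeroth-order term of a divergence inequality. -/
noncomputable def expWeighted (k s : ℝ) (u : ℝ × (Fin n → ℝ) → ℝ) (p : ℝ × (Fin n → ℝ)) : ℝ :=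
  Real.exp (k * (s - p.1)) * u p

theorem contDiff_expWeighted (k s : ℝ) (he : ContDiff ℝ 1 e) : ContDiff ℝ 1 (expWeighted k s e) :=
  ContDiff.mul (by fun_prop) he

theorem hasFDerivAt_expWeighted (k s : ℝ) {p : ℝ × (Fin n → ℝ)} (he : DifferentiableAt ℝ e p) :
    HasFDerivAt (expWeighted k s e) (Real.exp (k * (s - p.1)) •
      (fderiv ℝ e p - (k * e p) • ContinuousLinearMap.fst ℝ ℝ (Fin n → ℝ))) p := by
  have hexp : HasFDerivAt (fun q : ℝ × (Fin n → ℝ) => Real.exp (k * (s - q.1))) _ p :=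
    (((hasFDerivAt_fst (𝕜 := ℝ) (p := p)).const_sub s).const_mul k).exp
  refine (hexp.mul he.hasFDerivAt).congr_fderiv (ContinuousLinearMap.ext fun u => ?_)
  simp only [add_apply, smul_apply, sub_apply, neg_apply, smul_eq_mul]
  ring

theorem spaceTimeDiv_expWeighted (k s : ℝ) {p : ℝ × (Fin n → ℝ)} (he : DifferentiableAt ℝ e p)
    (hY : ∀ α, DifferentiableAt ℝ (Y α) p) :
    spaceTimeDiv (expWeighted k s e) (fun α => expWeighted k s (Y α)) p
      = Real.exp (k * (s - p.1)) * (spaceTimeDiv e Y p - k * e p) := by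
  have hDt : Dt (expWeighted k s e) p = Real.exp (k * (s - p.1)) * (Dt e p - k * e p) := by
    simp [Dt, (hasFDerivAt_expWeighted k s he).fderiv]
  have hDx : ∀ α, Dx α (expWeighted k s (Y α)) p
      = Real.exp (k * (s - p.1)) * Dx α (Y α) p := fun α => by
    simp [Dx, (hasFDerivAt_expWeighted k s (hY α)).fderiv]
  simp only [spaceTimeDiv, hDt, hDx, ← Finset.mul_sum]
  ring

theorem graphFlux_expWeighted (k s : ℝ) (x : Fin n → ℝ) :
    graphFlux (expWeighted k s e) (fun α => expWeighted k s (Y α)) ψ x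
      = Real.exp (k * (s - ψ x)) * graphFlux e Y ψ x := by
  simp only [graphFlux, expWeighted, mul_assoc, ← Finset.mul_sum, mul_add]

end SpaceTime

theorem intervalIntegral_le_setIntegral_of_mul_le {z q : ℝ → ℝ} {ε a b : ℝ} {S : Set ℝ}
    (hε : |ε| = 1) (hεab : 0 ≤ ε * (b - a)) (hS : MeasurableSet S) (habS : uIcc a b ⊆ S)
    (hz : IntervalIntegrable z volume a b) (hq : IntegrableOn q S) (hq0 : ∀ t ∈ S, 0 ≤ q t)
    (hzq : ∀ t ∈ uIcc a b, ε * z t ≤ q t) : ∫ t in a..b, z t ≤ ∫ t in S, q t := by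
  have hsub : uIoc a b ⊆ S := uIoc_subset_uIcc.trans habS
  have hεz : ∫ t in a..b, z t = ∫ t in uIoc a b, ε * z t := by
    rw [integral_const_mul]
    obtain rfl | rfl := eq_or_eq_neg_of_abs_eq hε
    · rw [one_mul, intervalIntegral.integral_of_le (by linarith), uIoc_of_le (by linarith)]
    · rw [neg_one_mul, intervalIntegral.integral_of_ge (by linarith), uIoc_of_ge (by linarith)]
  calc ∫ t in a..b, z t = ∫ t in uIoc a b, ε * z t := hεz
    _ ≤ ∫ t in uIoc a b, q t :=
      setIntegral_mono_on (hz.def'.const_mul ε) (hq.mono_set hsub) measurableSet_uIoc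
        fun t ht => hzq t (uIoc_subset_uIcc ht)
    _ ≤ ∫ t in S, q t :=
      setIntegral_mono_set hq ((ae_restrict_iff' hS).2 (.of_forall hq0)) hsub.eventuallyLE

section SlabIntegrals

variable {X Y : Type*} [MeasurableSpace X] [MeasurableSpace Y] {μ : Measure X} {ν : Measure Y}
  [SFinite μ] [SFinite ν] {I : Set X} {q : X × Y → ℝ}

theorem integrable_prod_restrict_of_integrableOn_prod_univ
    (hq : IntegrableOn q (I ×ˢ univ) (μ.prod ν)) : Integrable q ((μ.restrict I).prod ν) := by
  rwa [IntegrableOn, ← Measure.prod_restrict, Measure.restrict_univ] at hq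

theorem setIntegral_prod_univ_symm (hq : IntegrableOn q (I ×ˢ univ) (μ.prod ν)) :
    ∫ y, ∫ x in I, q (x, y) ∂μ ∂ν = ∫ p in I ×ˢ univ, q p ∂(μ.prod ν) := by
  rw [← Measure.prod_restrict, Measure.restrict_univ]
  exact (integral_prod_symm q (integrable_prod_restrict_of_integrableOn_prod_univ hq)).symm

end SlabIntegrals

section DivergenceEstimate

variable {n : ℕ} {e q : ℝ × (Fin n → ℝ) → ℝ} {Y : Fin n → ℝ × (Fin n → ℝ) → ℝ} {a b s K : ℝ}
  {Λ : NNReal}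

theorem spaceTimeDiv_expWeighted_le (he : ContDiff ℝ 1 e) (hY : ∀ α, ContDiff ℝ 1 (Y α))
    {ε B : ℝ} (hε : |ε| = 1) {p : ℝ × (Fin n → ℝ)} (hq : 0 ≤ q p)
    (hdiv : |spaceTimeDiv e Y p| ≤ K * e p + q p) (hB : ε * K * (s - p.1) ≤ B) :
    ε * spaceTimeDiv (expWeighted (ε * K) s e) (fun α => expWeighted (ε * K) s (Y α)) p
      ≤ Real.exp B * q p := by
  have hεε : ε * ε = 1 := by rw [← abs_mul_abs_self, hε, one_mul]
  have habs : ε * spaceTimeDiv e Y p ≤ |spaceTimeDiv e Y p| := by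
    simpa only [abs_mul, hε, one_mul] using le_abs_self (ε * spaceTimeDiv e Y p)
  rw [spaceTimeDiv_expWeighted (ε * K) s (he.differentiable one_ne_zero p)
    fun α => (hY α).differentiable one_ne_zero p]
  calc ε * (Real.exp (ε * K * (s - p.1)) * (spaceTimeDiv e Y p - ε * K * e p))
      = Real.exp (ε * K * (s - p.1)) * (ε * spaceTimeDiv e Y p - ε * ε * (K * e p)) := by ring
    _ ≤ Real.exp (ε * K * (s - p.1)) * q p := by
      gcongr
      rw [hεε]
      linarith
    _ ≤ Real.exp B * q p := by gcongr

theorem mul_sub_le_of_mem_uIcc {ε r t : ℝ} (hK : 0 ≤ K) (hε : |ε| = 1)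
    (hr : r ∈ Icc a b) (hs : s ∈ Icc a b) (ht : t ∈ uIcc r s) :
    ε * K * (s - t) ≤ K * (b - a) := by
  have htab : t ∈ Icc a b := uIcc_subset_Icc hr hs ht
  calc ε * K * (s - t) ≤ |ε * K * (s - t)| := le_abs_self _
    _ = K * |s - t| := by rw [abs_mul, abs_mul, hε, one_mul, abs_of_nonneg hK]
    _ ≤ K * (b - a) := by
      gcongr
      rw [abs_le]
      constructor <;> linarith [hs.1, hs.2, htab.1, htab.2]

theorem integral_sub_exp_mul_graphFlux_le (he : ContDiff ℝ 1 e) (hec : HasCompactSupport e)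
    (hY : ∀ α, ContDiff ℝ 1 (Y α)) (hYc : ∀ α, HasCompactSupport (Y α)) (hK : 0 ≤ K)
    (hdiv : ∀ t ∈ Icc a b, ∀ x, |spaceTimeDiv e Y (t, x)| ≤ K * e (t, x) + q (t, x))
    (hq0 : ∀ p, 0 ≤ q p) (hq : IntegrableOn q (Icc a b ×ˢ univ)) {ε : ℝ} (hε : |ε| = 1)
    {ψ : (Fin n → ℝ) → ℝ} (hψ : LipschitzWith Λ ψ) (hψab : ∀ x, ψ x ∈ Icc a b)
    (hs : s ∈ Icc a b) (hεs : ∀ x, 0 ≤ ε * (s - ψ x)) :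
    ∫ x, (e (s, x) - Real.exp (ε * K * (s - ψ x)) * graphFlux e Y ψ x)
      ≤ Real.exp (K * (b - a)) * ∫ p in Icc a b ×ˢ univ, q p := by
  set e' := expWeighted (ε * K) s e
  set Y' := fun α => expWeighted (ε * K) s (Y α)
  have he' : ContDiff ℝ 1 e' := contDiff_expWeighted _ s he
  have hY' : ∀ α, ContDiff ℝ 1 (Y' α) := fun α => contDiff_expWeighted _ s (hY α)
  have hec' : HasCompactSupport e' := hec.mul_left
  have hYc' : ∀ α, HasCompactSupport (Y' α) := fun α => (hYc α).mul_left
  have hflux : ∫ x, (e (s, x) - Real.exp (ε * K * (s - ψ x)) * graphFlux e Y ψ x)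
      = ∫ x, ∫ t in ψ x..s, spaceTimeDiv e' Y' (t, x) := by
    rw [← integral_sub_graphFlux he' hec' hY' hYc' hψ s]
    simp [e', Y', graphFlux_expWeighted, expWeighted]
  have hq' := integrable_prod_restrict_of_integrableOn_prod_univ hq
  rw [hflux, Measure.volume_eq_prod, ← setIntegral_prod_univ_symm hq, ← integral_const_mul]
  refine integral_mono_ae
    (integrable_intervalIntegral_graph (continuous_spaceTimeDiv he' hY')
      (hasCompactSupport_spaceTimeDiv hec' hYc') hψ.continuous s)
    (hq'.integral_prod_right.const_mul _) ?_
  filter_upwards [hq'.prod_left_ae] with x hx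
  rw [← integral_const_mul]
  have hsub : uIcc (ψ x) s ⊆ Icc a b := uIcc_subset_Icc (hψab x) hs
  exact intervalIntegral_le_setIntegral_of_mul_le hε (hεs x) measurableSet_Icc hsub
    (intervalIntegrable_slice (continuous_spaceTimeDiv he' hY') x _ _) (hx.const_mul _)
    (fun t _ => mul_nonneg (Real.exp_pos _).le (hq0 _)) fun t ht =>
      spaceTimeDiv_expWeighted_le he hY hε (hq0 _) (hdiv t (hsub ht) x)
        (mul_sub_le_of_mem_uIcc hK hε (hψab x) hs ht)

theorem sub_exp_mul_le_add_of_eventuallyEq {φ ψ ψ' : (Fin n → ℝ) → ℝ} {x : Fin n → ℝ}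
    {B h k k' : ℝ} (hψ : ψ =ᶠ[𝓝 x] φ) (hψ' : ψ' =ᶠ[𝓝 x] fun _ => s) (hk : k * (s - ψ x) ≤ B)
    (h0 : 0 ≤ h) (hflux : graphFlux e Y φ x ≤ h) :
    e (s, x) - Real.exp B * h
      ≤ (e (s, x) - Real.exp (k * (s - ψ x)) * graphFlux e Y ψ x)
        + (e (s, x) - Real.exp (k' * (s - ψ' x)) * graphFlux e Y ψ' x) := by
  have hle : Real.exp (k * (s - ψ x)) * graphFlux e Y ψ x ≤ Real.exp B * h := by
    rw [graphFlux_congr hψ]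
    exact (mul_le_mul_of_nonneg_left hflux (Real.exp_pos _).le).trans (by gcongr)
  rw [graphFlux_congr hψ', graphFlux_const, hψ'.self_of_nhds, sub_self, mul_zero, Real.exp_zero,
    one_mul, sub_self, add_zero]
  linarith

theorem integrable_sub_exp_mul_graphFlux (he : ContDiff ℝ 1 e) (hec : HasCompactSupport e)
    (hY : ∀ α, ContDiff ℝ 1 (Y α)) (hYc : ∀ α, HasCompactSupport (Y α))
    {ψ : (Fin n → ℝ) → ℝ} (hψ : LipschitzWith Λ ψ) (k s : ℝ) :
    Integrable fun x => e (s, x) - Real.exp (k * (s - ψ x)) * graphFlux e Y ψ x := by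
  refine (integrable_comp_graph he.continuous hec continuous_const).sub ?_
  simp only [← graphFlux_expWeighted]
  exact integrable_graphFlux (contDiff_expWeighted k s he).continuous hec.mul_left
    (fun α => (contDiff_expWeighted k s (hY α)).continuous) (fun α => (hYc α).mul_left) hψ

-- The graph may cross the slice `t = s`: the graph of `min φ s` handles `{φ < s}` and that of
-- `max φ s` handles `{s < φ}`, each running along the slice, at no cost, on the other set.
theorem sub_exp_mul_le_min_add_max (hK : 0 ≤ K) (hs : s ∈ Icc a b) {φ : (Fin n → ℝ) → ℝ}
    {x : Fin n → ℝ} (hφ : ContinuousAt φ x) (hφab : φ x ∈ Icc a b) (hne : φ x ≠ s) {h : ℝ}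
    (h0 : 0 ≤ h) (hflux : graphFlux e Y φ x ≤ h) :
    e (s, x) - Real.exp (K * (b - a)) * h
      ≤ (e (s, x) - Real.exp (1 * K * (s - min (φ x) s)) * graphFlux e Y (fun y => min (φ y) s) x)
        + (e (s, x)
          - Real.exp (-1 * K * (s - max (φ x) s)) * graphFlux e Y (fun y => max (φ y) s) x) := by
  have hexp : ∀ {ε r : ℝ}, |ε| = 1 → r = φ x → ε * K * (s - r) ≤ K * (b - a) := fun hε hr =>
    mul_sub_le_of_mem_uIcc hK hε (hr ▸ hφab) hs left_mem_uIcc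
  obtain hlt | hlt := lt_or_gt_of_ne hne
  · have hev : ∀ᶠ y in 𝓝 x, φ y ≤ s := (hφ.eventually_lt_const hlt).mono fun _ => le_of_lt
    exact sub_exp_mul_le_add_of_eventuallyEq (hev.mono fun _ => min_eq_left)
      (hev.mono fun _ => max_eq_right) (hexp abs_one (min_eq_left hlt.le)) h0 hflux
  · have hev : ∀ᶠ y in 𝓝 x, s ≤ φ y := (hφ.eventually_const_lt hlt).mono fun _ => le_of_lt
    rw [add_comm]
    exact sub_exp_mul_le_add_of_eventuallyEq (hev.mono fun _ => max_eq_left)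
      (hev.mono fun _ => min_eq_right) (hexp (by simp) (max_eq_left hlt.le)) h0 hflux

theorem integral_slice_le_of_graphFlux_le (he : ContDiff ℝ 1 e) (hec : HasCompactSupport e)
    (hY : ∀ α, ContDiff ℝ 1 (Y α)) (hYc : ∀ α, HasCompactSupport (Y α)) (hK : 0 ≤ K)
    (hdiv : ∀ t ∈ Icc a b, ∀ x, |spaceTimeDiv e Y (t, x)| ≤ K * e (t, x) + q (t, x))
    (hq0 : ∀ p, 0 ≤ q p) (hq : IntegrableOn q (Icc a b ×ˢ univ))
    {φ : (Fin n → ℝ) → ℝ} (hφ : LipschitzWith Λ φ) (hφab : ∀ x, φ x ∈ Icc a b)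
    (hs : s ∈ Icc a b) (hφs : ∀ᵐ x, φ x ≠ s) {h : (Fin n → ℝ) → ℝ} (hh : Integrable h)
    (h0 : ∀ x, 0 ≤ h x) (hflux : ∀ᵐ x, graphFlux e Y φ x ≤ h x) :
    ∫ x, e (s, x)
      ≤ Real.exp (K * (b - a)) * ((∫ x, h x) + 2 * ∫ p in Icc a b ×ˢ univ, q p) := by
  have hmin : LipschitzWith Λ fun x => min (φ x) s := hφ.min_const s
  have hmax : LipschitzWith Λ fun x => max (φ x) s := hφ.max_const s
  have hpast := integral_sub_exp_mul_graphFlux_le he hec hY hYc hK hdiv hq0 hq abs_one hmin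
    (fun x => ⟨le_min (hφab x).1 hs.1, (min_le_right _ _).trans hs.2⟩) hs fun x => by simp
  have hfuture := integral_sub_exp_mul_graphFlux_le he hec hY hYc hK hdiv hq0 hq
    (ε := -1) (by simp) hmax
    (fun x => ⟨hs.1.trans (le_max_right _ _), max_le (hφab x).2 hs.2⟩) hs fun x => by simp
  have hslice : Integrable fun x => e (s, x) :=
    integrable_comp_graph he.continuous hec continuous_const
  have hmin_int := integrable_sub_exp_mul_graphFlux he hec hY hYc hmin (1 * K) s
  have hmax_int := integrable_sub_exp_mul_graphFlux he hec hY hYc hmax (-1 * K) s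
  have hsum : ∫ x, (e (s, x) - Real.exp (K * (b - a)) * h x) ≤ _ :=
    integral_mono_ae (hslice.sub (hh.const_mul _)) (hmin_int.add hmax_int) <| by
      filter_upwards [hφs, hflux] with x hne hx
      exact sub_exp_mul_le_min_add_max hK hs hφ.continuous.continuousAt (hφab x) hne (h0 x) hx
  rw [integral_sub hslice (hh.const_mul _), integral_const_mul,
    integral_add' hmin_int hmax_int] at hsum
  linarith

theorem integral_slice_le_of_graphFlux_le_of_contDiffOn {U : Set (ℝ × (Fin n → ℝ))} {R : ℝ}
    (hU : IsOpen U) (hslab : Icc a b ×ˢ univ ⊆ U) (he : ContDiffOn ℝ 1 e U)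
    (heR : ∀ t x, R < ‖x‖ → e (t, x) = 0) (hY : ∀ α, ContDiffOn ℝ 1 (Y α) U)
    (hYR : ∀ α t x, R < ‖x‖ → Y α (t, x) = 0) (hK : 0 ≤ K)
    (hdiv : ∀ t ∈ Icc a b, ∀ x, |spaceTimeDiv e Y (t, x)| ≤ K * e (t, x) + q (t, x))
    (hq0 : ∀ p, 0 ≤ q p) (hq : IntegrableOn q (Icc a b ×ˢ univ))
    {φ : (Fin n → ℝ) → ℝ} (hφ : LipschitzWith Λ φ) (hφab : ∀ x, φ x ∈ Icc a b)
    (hs : s ∈ Icc a b) (hφs : ∀ᵐ x, φ x ≠ s) {h : (Fin n → ℝ) → ℝ} (hh : Integrable h)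
    (h0 : ∀ x, 0 ≤ h x) (hflux : ∀ᵐ x, graphFlux e Y φ x ≤ h x) :
    ∫ x, e (s, x)
      ≤ Real.exp (K * (b - a)) * ((∫ x, h x) + 2 * ∫ p in Icc a b ×ˢ univ, q p) := by
  obtain ⟨e', he', hec, hee⟩ :=
    exists_contDiff_hasCompactSupport_eventuallyEq_slab (k := 1) hU hslab he heR
  choose Y' hY' hYc hYY using fun α =>
    exists_contDiff_hasCompactSupport_eventuallyEq_slab (k := 1) hU hslab (hY α) (hYR α)
  have he_eq : ∀ {t}, t ∈ Icc a b → ∀ x, e' (t, x) = e (t, x) := fun ht x =>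
    (hee _ ⟨ht, mem_univ x⟩).self_of_nhds
  have hY_eq : ∀ α x, Y' α (φ x, x) = Y α (φ x, x) := fun α x =>
    (hYY α _ ⟨hφab x, mem_univ x⟩).self_of_nhds
  have hdiv' : ∀ t ∈ Icc a b, ∀ x, |spaceTimeDiv e' Y' (t, x)| ≤ K * e' (t, x) + q (t, x) :=
    fun t ht x => by
      rw [spaceTimeDiv_congr (hee _ ⟨ht, mem_univ x⟩) fun α => hYY α _ ⟨ht, mem_univ x⟩,
        he_eq ht]
      exact hdiv t ht x
  have hflux' : ∀ᵐ x, graphFlux e' Y' φ x ≤ h x := by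
    simpa only [graphFlux, he_eq (hφab _), hY_eq] using hflux
  simpa only [he_eq hs] using
    integral_slice_le_of_graphFlux_le he' hec hY' hYc hK hdiv' hq0 hq hφ hφab hs hφs hh h0 hflux'

end DivergenceEstimate

section PointwiseEstimates

variable {ι : Type*} [Fintype ι]

theorem sum_sum_mul_mul_comm {G : ι → ι → ℝ} (hG : ∀ α β, G α β = G β α) (ξ η : ι → ℝ) :
    ∑ α, ∑ β, G α β * ξ α * η β = ∑ α, ∑ β, G α β * η α * ξ β := by
  rw [Finset.sum_comm]
  exact Finset.sum_congr rfl fun α _ => Finset.sum_congr rfl fun β _ => by rw [hG β α]; ring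

theorem sum_sum_mul_add_mul_mul_add_mul {G : ι → ι → ℝ} (hG : ∀ α β, G α β = G β α)
    (ξ η : ι → ℝ) (r : ℝ) :
    ∑ α, ∑ β, G α β * (ξ α + r * η α) * (ξ β + r * η β)
      = (∑ α, ∑ β, G α β * ξ α * ξ β) + 2 * r * (∑ α, ∑ β, G α β * η α * ξ β)
        + r ^ 2 * ∑ α, ∑ β, G α β * η α * η β := by
  have hterm : ∀ α β, G α β * (ξ α + r * η α) * (ξ β + r * η β)
      = G α β * ξ α * ξ β + r * (G α β * ξ α * η β) + r * (G α β * η α * ξ β)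
        + r ^ 2 * (G α β * η α * η β) := fun α β => by ring
  simp only [hterm, Finset.sum_add_distrib, ← Finset.mul_sum, sum_sum_mul_mul_comm hG ξ η]
  ring

theorem abs_mul_le_of_sq_le {x y D : ℝ} (hx : x ^ 2 ≤ D) (hy : y ^ 2 ≤ D) : |x * y| ≤ D := by
  rw [abs_le]
  constructor <;> nlinarith [sq_nonneg (x + y), sq_nonneg (x - y)]

theorem abs_sum_mul_le_card_mul {A z : ι → ℝ} {M D : ℝ} (hA : ∀ i, |A i| ≤ M)
    (hz : ∀ i, |z i| ≤ D) : |∑ i, A i * z i| ≤ Fintype.card ι * (M * D) := by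
  calc |∑ i, A i * z i| ≤ ∑ i, |A i * z i| := Finset.abs_sum_le_sum_abs _ _
    _ ≤ ∑ _i : ι, M * D := Finset.sum_le_sum fun i _ => by
      rw [abs_mul]
      exact mul_le_mul (hA i) (hz i) (abs_nonneg _) ((abs_nonneg _).trans (hA i))
    _ = Fintype.card ι * (M * D) := by simp

theorem abs_sum_sum_mul_le_card_sq_mul {A z : ι → ι → ℝ} {M D : ℝ} (hA : ∀ i j, |A i j| ≤ M)
    (hz : ∀ i j, |z i j| ≤ D) :
    |∑ i, ∑ j, A i j * z i j| ≤ (Fintype.card ι : ℝ) ^ 2 * (M * D) := by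
  simpa only [Fintype.sum_prod_type, Fintype.card_prod, Nat.cast_mul, sq] using
    abs_sum_mul_le_card_mul (A := fun p : ι × ι => A p.1 p.2) (z := fun p => z p.1 p.2)
      (fun p => hA p.1 p.2) fun p => hz p.1 p.2

/-- The growth rate of the energy of a wave equation in `N` space variables whose lower-order
coefficients and first derivatives of the metric are bounded by `M`. -/
def energyRate (N M : ℝ) : ℝ := 3 + (4 + 2 * N + 3 * N ^ 2) * M

theorem abs_energy_production_le {Gt Gx : ι → ι → ℝ} {d b : ι → ℝ} {v vt f b0 c M D : ℝ}
    (hGt : ∀ α β, |Gt α β| ≤ M) (hGx : ∀ α β, |Gx α β| ≤ M) (hb0 : |b0| ≤ M)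
    (hb : ∀ α, |b α| ≤ M) (hc : |c| ≤ M) (hd : ∀ α, d α ^ 2 ≤ D) (hv : v ^ 2 ≤ D)
    (hvt : vt ^ 2 ≤ D) :
    |2 * vt * (f - b0 * vt - (∑ α, b α * d α) - c * v) + (∑ α, ∑ β, Gt α β * d α * d β)
        + 2 * v * vt - 2 * vt * ∑ α, ∑ β, Gx α β * d β|
      ≤ energyRate (Fintype.card ι) M * D + f ^ 2 := by
  set N : ℝ := (Fintype.card ι : ℝ)
  have hsource : |2 * vt * f| ≤ D + f ^ 2 := by
    rw [abs_le]
    constructor <;> nlinarith [sq_nonneg (vt + f), sq_nonneg (vt - f)]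
  have htime : |b0 * (vt * vt)| ≤ M * D := by
    rw [abs_mul]
    exact mul_le_mul hb0 (abs_mul_le_of_sq_le hvt hvt) (abs_nonneg _) ((abs_nonneg _).trans hb0)
  have hspace : |∑ α, b α * (d α * vt)| ≤ N * (M * D) :=
    abs_sum_mul_le_card_mul hb fun α => abs_mul_le_of_sq_le (hd α) hvt
  have hzeroth : |c * (v * vt)| ≤ M * D := by
    rw [abs_mul]
    exact mul_le_mul hc (abs_mul_le_of_sq_le hv hvt) (abs_nonneg _) ((abs_nonneg _).trans hc)
  have hmetric_t : |∑ α, ∑ β, Gt α β * (d α * d β)| ≤ N ^ 2 * (M * D) :=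
    abs_sum_sum_mul_le_card_sq_mul hGt fun α β => abs_mul_le_of_sq_le (hd α) (hd β)
  have hmetric_x : |∑ α, ∑ β, Gx α β * (d β * vt)| ≤ N ^ 2 * (M * D) :=
    abs_sum_sum_mul_le_card_sq_mul hGx fun _ β => abs_mul_le_of_sq_le (hd β) hvt
  have hvv : |v * vt| ≤ D := abs_mul_le_of_sq_le hv hvt
  simp only [← mul_assoc, ← Finset.sum_mul] at hspace hmetric_t hmetric_x htime hzeroth
  rw [abs_le] at *
  unfold energyRate
  constructor <;> linarith

end PointwiseEstimates

section WaveEnergy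

variable {n : ℕ} {g : Fin n → Fin n → ℝ × (Fin n → ℝ) → ℝ} {v : ℝ × (Fin n → ℝ) → ℝ}
  {U : Set (ℝ × (Fin n → ℝ))} {p : ℝ × (Fin n → ℝ)}

/-- The energy density of `v` for the metric `g`; its integral over a time slice is `energy`. -/
noncomputable def energyDensity (g : Fin n → Fin n → ℝ × (Fin n → ℝ) → ℝ)
    (v : ℝ × (Fin n → ℝ) → ℝ) (p : ℝ × (Fin n → ℝ)) : ℝ :=
  (Dt v p) ^ 2 + (∑ α, ∑ β, g α β p * Dx α v p * Dx β v p) + (v p) ^ 2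

/-- The spatial energy flux `2 ∂_t v g^{αβ} ∂_β v` produced by the multiplier `∂_t v`. -/
noncomputable def energyFlux (g : Fin n → Fin n → ℝ × (Fin n → ℝ) → ℝ)
    (v : ℝ × (Fin n → ℝ) → ℝ) (α : Fin n) (p : ℝ × (Fin n → ℝ)) : ℝ :=
  2 * Dt v p * ∑ β, g α β p * Dx β v p

theorem contDiffOn_Dt (hU : IsOpen U) (hv : ContDiffOn ℝ 2 v U) : ContDiffOn ℝ 1 (Dt v) U :=
  (hv.fderiv_of_isOpen hU one_add_one_eq_two.le).clm_apply contDiffOn_const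

theorem contDiffOn_Dx (hU : IsOpen U) (hv : ContDiffOn ℝ 2 v U) (α : Fin n) :
    ContDiffOn ℝ 1 (Dx α v) U :=
  (hv.fderiv_of_isOpen hU one_add_one_eq_two.le).clm_apply contDiffOn_const

theorem contDiffOn_energyDensity (hU : IsOpen U) (hg : ∀ α β, ContDiffOn ℝ 1 (g α β) U)
    (hv : ContDiffOn ℝ 2 v U) : ContDiffOn ℝ 1 (energyDensity g v) U :=
  (((contDiffOn_Dt hU hv).pow 2).add (ContDiffOn.sum fun α _ => ContDiffOn.sum fun β _ =>
    ((hg α β).mul (contDiffOn_Dx hU hv α)).mul (contDiffOn_Dx hU hv β))).add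
      ((hv.of_le one_le_two).pow 2)

theorem contDiffOn_energyFlux (hU : IsOpen U) (hg : ∀ α β, ContDiffOn ℝ 1 (g α β) U)
    (hv : ContDiffOn ℝ 2 v U) (α : Fin n) : ContDiffOn ℝ 1 (energyFlux g v α) U :=
  (contDiffOn_const.mul (contDiffOn_Dt hU hv)).mul
    (ContDiffOn.sum fun β _ => (hg α β).mul (contDiffOn_Dx hU hv β))

theorem energyDensity_eq_zero (hv : v =ᶠ[𝓝 p] 0) : energyDensity g v p = 0 := by
  simp [energyDensity, Dt, Dx, hv.fderiv_eq, hv.self_of_nhds]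

theorem energyFlux_eq_zero (hv : v =ᶠ[𝓝 p] 0) (α : Fin n) : energyFlux g v α p = 0 := by
  simp [energyFlux, Dt, hv.fderiv_eq]

theorem sq_add_sum_sq_add_sq_le_mul_energyDensity {C₁ : ℝ} (hC₁ : 0 < C₁)
    (hell : C₁ * ∑ α, Dx α v p ^ 2 ≤ ∑ α, ∑ β, g α β p * Dx α v p * Dx β v p) :
    Dt v p ^ 2 + (∑ α, Dx α v p ^ 2) + v p ^ 2 ≤ (1 + 1 / C₁) * energyDensity g v p := by
  have hdiv : ∑ α, Dx α v p ^ 2 ≤ 1 / C₁ * ∑ α, ∑ β, g α β p * Dx α v p * Dx β v p := by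
    rw [one_div_mul_eq_div, le_div_iff₀' hC₁]
    exact hell
  have hquad : 0 ≤ ∑ α, ∑ β, g α β p * Dx α v p * Dx β v p := le_trans (by positivity) hell
  have ht : 0 ≤ 1 / C₁ * Dt v p ^ 2 := by positivity
  have h0 : 0 ≤ 1 / C₁ * v p ^ 2 := by positivity
  unfold energyDensity
  linarith

theorem Dx_Dt_comm (hv : ContDiffAt ℝ 2 v p) (α : Fin n) : Dx α (Dt v) p = Dt (Dx α v) p := by
  have hdiff : DifferentiableAt ℝ (fderiv ℝ v) p :=
    (hv.fderiv_right one_add_one_eq_two.le).differentiableAt one_ne_zero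
  have hsymm : IsSymmSndFDerivAt ℝ v p := hv.isSymmSndFDerivAt (by simp)
  have happly : ∀ u w, fderiv ℝ (fun q => fderiv ℝ v q u) p w = fderiv ℝ (fderiv ℝ v) p w u :=
    fun u w => by simp [fderiv_clm_apply hdiff (differentiableAt_const u)]
  exact (happly _ _).trans ((hsymm _ _).trans (happly _ _).symm)

theorem differentiableAt_Dt (hv : ContDiffAt ℝ 2 v p) : DifferentiableAt ℝ (Dt v) p :=
  ((hv.fderiv_right one_add_one_eq_two.le).differentiableAt one_ne_zero).clm_apply
    (differentiableAt_const _)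

theorem differentiableAt_Dx (hv : ContDiffAt ℝ 2 v p) (α : Fin n) :
    DifferentiableAt ℝ (Dx α v) p :=
  ((hv.fderiv_right one_add_one_eq_two.le).differentiableAt one_ne_zero).clm_apply
    (differentiableAt_const _)

theorem fderiv_energyDensity (hg : ∀ α β, DifferentiableAt ℝ (g α β) p) (hv : ContDiffAt ℝ 2 v p)
    (u : ℝ × (Fin n → ℝ)) :
    fderiv ℝ (energyDensity g v) p u = 2 * Dt v p * fderiv ℝ (Dt v) p u
      + (∑ α, ∑ β, (fderiv ℝ (g α β) p u * Dx α v p * Dx β v p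
        + g α β p * fderiv ℝ (Dx α v) p u * Dx β v p
        + g α β p * Dx α v p * fderiv ℝ (Dx β v) p u)) + 2 * v p * fderiv ℝ v p u := by
  have hDt := (differentiableAt_Dt hv).hasFDerivAt
  have hDx := fun α => (differentiableAt_Dx hv α).hasFDerivAt
  have hmetric := fun α β => (hg α β).hasFDerivAt
  have henergy := ((hDt.pow 2).fun_add (HasFDerivAt.fun_sum (u := Finset.univ) fun α _ =>
    HasFDerivAt.fun_sum (u := Finset.univ) fun β _ =>
      ((hmetric α β).fun_mul (hDx α)).fun_mul (hDx β))).fun_add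
        ((hv.differentiableAt two_ne_zero).hasFDerivAt.pow 2)
  rw [show fderiv ℝ (energyDensity g v) p = _ from henergy.fderiv]
  simp only [add_apply, smul_apply, sum_apply, smul_eq_mul, Nat.cast_ofNat, Nat.add_one_sub_one,
    pow_one, nsmul_eq_mul]
  congr 2
  exact Finset.sum_congr rfl fun α _ => Finset.sum_congr rfl fun β _ => by ring

theorem fderiv_energyFlux (hg : ∀ α β, DifferentiableAt ℝ (g α β) p) (hv : ContDiffAt ℝ 2 v p)
    (α : Fin n) (u : ℝ × (Fin n → ℝ)) :
    fderiv ℝ (energyFlux g v α) p u = 2 * fderiv ℝ (Dt v) p u * (∑ β, g α β p * Dx β v p)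
      + 2 * Dt v p * ∑ β, (fderiv ℝ (g α β) p u * Dx β v p
        + g α β p * fderiv ℝ (Dx β v) p u) := by
  have hflux := ((differentiableAt_Dt hv).hasFDerivAt.const_mul 2).fun_mul
    (HasFDerivAt.fun_sum (u := Finset.univ) fun β _ =>
      (hg α β).hasFDerivAt.fun_mul (differentiableAt_Dx hv β).hasFDerivAt)
  rw [show fderiv ℝ (energyFlux g v α) p = _ from hflux.fderiv]
  simp only [add_apply, smul_apply, sum_apply, smul_eq_mul]
  rw [add_comm, mul_comm (∑ β, _)]
  congr 2
  exact Finset.sum_congr rfl fun β _ => by ring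

-- The mixed derivatives `∂_α ∂_t v` produced by `∂_t` of the density cancel those produced by the
-- divergence of the flux.
theorem spaceTimeDiv_energyDensity_energyFlux (hg : ∀ α β, DifferentiableAt ℝ (g α β) p)
    (hgs : ∀ α β, g α β p = g β α p) (hv : ContDiffAt ℝ 2 v p) :
    spaceTimeDiv (energyDensity g v) (energyFlux g v) p
      = 2 * Dt v p * (Dt (Dt v) p - ∑ α, ∑ β, g α β p * Dx α (Dx β v) p)
        + (∑ α, ∑ β, Dt (g α β) p * Dx α v p * Dx β v p) + 2 * v p * Dt v p
        - 2 * Dt v p * ∑ α, ∑ β, Dx α (g α β) p * Dx β v p := by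
  have hDt : Dt (energyDensity g v) p = 2 * Dt v p * Dt (Dt v) p
      + (∑ α, ∑ β, Dt (g α β) p * Dx α v p * Dx β v p)
      + 2 * (∑ α, ∑ β, g α β p * Dt (Dx α v) p * Dx β v p) + 2 * v p * Dt v p := by
    refine (fderiv_energyDensity hg hv (1, 0)).trans ?_
    simp only [← Dt.eq_1, Finset.sum_add_distrib,
      sum_sum_mul_mul_comm hgs (fun α => Dx α v p) fun α => Dt (Dx α v) p]
    ring
  have hDx : ∀ α, Dx α (energyFlux g v α) p
      = 2 * (∑ β, g α β p * Dt (Dx α v) p * Dx β v p)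
        + 2 * Dt v p * ((∑ β, Dx α (g α β) p * Dx β v p)
          + ∑ β, g α β p * Dx α (Dx β v) p) := fun α => by
    refine (fderiv_energyFlux hg hv α (0, Pi.single α 1)).trans ?_
    simp only [← Dx.eq_1, Dx_Dt_comm hv, Finset.sum_add_distrib, mul_assoc, Finset.mul_sum]
    congr 1
    exact Finset.sum_congr rfl fun β _ => by ring
  simp only [spaceTimeDiv, hDt, hDx, Finset.sum_add_distrib, ← Finset.mul_sum]
  ring

theorem abs_spaceTimeDiv_energy_le {b0 c f : ℝ} {b : Fin n → ℝ} {C₁ M : ℝ} (hC₁ : 0 < C₁)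
    (hM : 0 ≤ M) (hg : ∀ α β, DifferentiableAt ℝ (g α β) p) (hgs : ∀ α β, g α β p = g β α p)
    (hell : ∀ ξ : Fin n → ℝ, C₁ * ∑ α, ξ α ^ 2 ≤ ∑ α, ∑ β, g α β p * ξ α * ξ β)
    (hgM : ∀ α β, |Dt (g α β) p| ≤ M ∧ ∀ μ, |Dx μ (g α β) p| ≤ M)
    (hb0 : |b0| ≤ M) (hb : ∀ α, |b α| ≤ M) (hc : |c| ≤ M) (hv : ContDiffAt ℝ 2 v p)
    (hpde : Dt (Dt v) p - (∑ α, ∑ β, g α β p * Dx α (Dx β v) p) + b0 * Dt v p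
      + (∑ α, b α * Dx α v p) + c * v p = f) :
    |spaceTimeDiv (energyDensity g v) (energyFlux g v) p|
      ≤ energyRate n M * (1 + 1 / C₁) * energyDensity g v p + f ^ 2 := by
  have hwave : Dt (Dt v) p - (∑ α, ∑ β, g α β p * Dx α (Dx β v) p)
      = f - b0 * Dt v p - (∑ α, b α * Dx α v p) - c * v p := by linarith
  have hspace : ∀ α, Dx α v p ^ 2 ≤ ∑ β, Dx β v p ^ 2 := fun α =>
    Finset.single_le_sum (f := fun β => Dx β v p ^ 2) (fun _ _ => sq_nonneg _)
      (Finset.mem_univ α)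
  have hspace0 : 0 ≤ ∑ α, Dx α v p ^ 2 := by positivity
  have ht0 := sq_nonneg (Dt v p)
  have hv0 := sq_nonneg (v p)
  have hrate : 0 ≤ energyRate n M := by unfold energyRate; positivity
  rw [spaceTimeDiv_energyDensity_energyFlux hg hgs hv, hwave]
  calc _ ≤ energyRate n M * (Dt v p ^ 2 + (∑ α, Dx α v p ^ 2) + v p ^ 2) + f ^ 2 := by
        simpa only [Fintype.card_fin] using abs_energy_production_le (fun α β => (hgM α β).1)
          (fun α β => (hgM α β).2 α) hb0 hb hc (fun α => by linarith [hspace α])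
          (by linarith) (by linarith)
    _ ≤ energyRate n M * ((1 + 1 / C₁) * energyDensity g v p) + f ^ 2 := by
      gcongr
      exact sq_add_sum_sq_add_sq_le_mul_energyDensity hC₁ (hell _)
    _ = _ := by rw [mul_assoc]

end WaveEnergy

section Trace

variable {n : ℕ} {v : ℝ × (Fin n → ℝ) → ℝ} {φ : (Fin n → ℝ) → ℝ} {Λ : NNReal}

/-- The integrand `w² + |∇w|²` of the squared `H¹` norm of `w`. -/
noncomputable def sobolevDensity (w : (Fin n → ℝ) → ℝ) (x : Fin n → ℝ) : ℝ :=
  w x ^ 2 + ∑ α, (fderiv ℝ w x (Pi.single α 1)) ^ 2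

theorem sobolevDensity_nonneg (w : (Fin n → ℝ) → ℝ) (x : Fin n → ℝ) : 0 ≤ sobolevDensity w x := by
  unfold sobolevDensity
  positivity

theorem integrable_sobolevDensity {w : (Fin n → ℝ) → ℝ} (hw : LipschitzWith Λ w)
    (hc : HasCompactSupport w) : Integrable (sobolevDensity w) := by
  refine (hw.continuous.memLp_of_hasCompactSupport hc).integrable_sq.add
    (integrable_finsetSum _ fun α _ => MemLp.integrable_sq ?_)
  exact (hc.fderiv_apply ℝ _).memLp_of_bound
    (measurable_fderiv_apply_const ℝ w _).aestronglyMeasurable _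
    (.of_forall fun x => norm_fderiv_apply_le_of_lipschitz hw x _)

theorem fderiv_trace_apply_single {x : Fin n → ℝ} (hv : DifferentiableAt ℝ v (φ x, x))
    (hφ : DifferentiableAt ℝ φ x) (α : Fin n) :
    fderiv ℝ (fun y => v (φ y, y)) x (Pi.single α 1)
      = Dx α v (φ x, x) + Dt v (φ x, x) * fderiv ℝ φ x (Pi.single α 1) := by
  have hgraph : HasFDerivAt (fun y => (φ y, y)) _ x := hφ.hasFDerivAt.prodMk (hasFDerivAt_id x)
  have hsplit : ((fderiv ℝ φ x (Pi.single α 1), Pi.single α 1) : ℝ × (Fin n → ℝ))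
      = (0, Pi.single α 1) + fderiv ℝ φ x (Pi.single α 1) • ((1, 0) : ℝ × (Fin n → ℝ)) := by
    ext <;> simp
  have htrace : fderiv ℝ (fun y => v (φ y, y)) x = _ :=
    (HasFDerivAt.comp (f := fun y => (φ y, y)) x hv.hasFDerivAt hgraph).fderiv
  rw [htrace]
  simp only [ContinuousLinearMap.comp_apply, ContinuousLinearMap.prod_apply,
    ContinuousLinearMap.id_apply, hsplit, map_add, map_smul, smul_eq_mul, Dx, Dt]
  ring

-- Completing the square, the flux is `|∇w|_g² + w² - (∂_t v)² (|∇φ|_g² - 1)`, so that a null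
-- (or timelike) graph needs no control of the transversal derivative `∂_t v`.
theorem graphFlux_energy_le_sobolevDensity {g : Fin n → Fin n → ℝ × (Fin n → ℝ) → ℝ} {C₂ : ℝ}
    {x : Fin n → ℝ} (hC₂ : 0 ≤ C₂) (hgs : ∀ α β, g α β (φ x, x) = g β α (φ x, x))
    (hell : ∀ ξ : Fin n → ℝ, ∑ α, ∑ β, g α β (φ x, x) * ξ α * ξ β ≤ C₂ * ∑ α, ξ α ^ 2)
    (hchar : 1 ≤ ∑ α, ∑ β, g α β (φ x, x) * fderiv ℝ φ x (Pi.single α 1)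
      * fderiv ℝ φ x (Pi.single β 1))
    (hv : DifferentiableAt ℝ v (φ x, x)) (hφ : DifferentiableAt ℝ φ x) :
    graphFlux (energyDensity g v) (energyFlux g v) φ x
      ≤ (C₂ + 1) * sobolevDensity (fun y => v (φ y, y)) x := by
  set p := (φ x, x)
  set r := fun α => fderiv ℝ φ x (Pi.single α 1)
  have hflux : ∑ α, energyFlux g v α p * r α
      = 2 * Dt v p * ∑ α, ∑ β, g α β p * r α * Dx β v p := by
    simp only [energyFlux, mul_assoc, Finset.mul_sum, Finset.sum_mul]
    exact Finset.sum_congr rfl fun α _ => Finset.sum_congr rfl fun β _ => by ring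
  have hsquare := sum_sum_mul_add_mul_mul_add_mul hgs (fun α => Dx α v p) r (Dt v p)
  have hgrad := hell fun α => Dx α v p + Dt v p * r α
  have hnull := mul_le_mul_of_nonneg_left hchar (sq_nonneg (Dt v p))
  have hgrad0 : 0 ≤ ∑ α, (Dx α v p + Dt v p * r α) ^ 2 := by positivity
  have hv0 : 0 ≤ C₂ * v p ^ 2 := by positivity
  simp only [graphFlux, sobolevDensity, fderiv_trace_apply_single hv hφ]
  rw [hflux, energyDensity]
  linarith

theorem integrable_sobolevDensity_trace {a b R : ℝ} {U : Set (ℝ × (Fin n → ℝ))} (hU : IsOpen U)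
    (hslab : Icc a b ×ˢ univ ⊆ U) (hv : ContDiffOn ℝ 1 v U)
    (hR : ∀ t x, R < ‖x‖ → v (t, x) = 0) (hφ : LipschitzWith Λ φ) (hφab : ∀ x, φ x ∈ Icc a b) :
    Integrable (sobolevDensity fun x => v (φ x, x)) := by
  obtain ⟨w, hw, hwc, hwv⟩ :=
    exists_contDiff_hasCompactSupport_eventuallyEq_slab (k := 1) hU hslab hv hR
  have htrace : (fun x => v (φ x, x)) = fun x => w (φ x, x) :=
    funext fun x => (hwv _ ⟨hφab x, mem_univ x⟩).self_of_nhds.symm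
  obtain ⟨L, hL⟩ := hw.lipschitzWith_of_hasCompactSupport hwc one_ne_zero
  rw [htrace]
  exact integrable_sobolevDensity (hL.comp (hφ.prodMk .id))
    (hasCompactSupport_of_forall_slice_eq_zero hwc fun x hx => hx _)

end Trace

section Goursat

/-- A constant for the Goursat estimate in `n` space variables on a time interval of length `τ`. -/
noncomputable def goursatConst (n : ℕ) (τ C₁ C₂ M : ℝ) : ℝ :=
  2 * Real.exp (energyRate n M * (1 + 1 / C₁) * τ) * (C₂ + 1)

theorem exp_mul_add_two_mul_le_goursatConst_mul {n : ℕ} {τ C₁ C₂ M W F : ℝ} (hC₂ : 0 ≤ C₂)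
    (hW : 0 ≤ W) (hF : 0 ≤ F) :
    Real.exp (energyRate n M * (1 + 1 / C₁) * τ) * ((C₂ + 1) * W + 2 * F)
      ≤ goursatConst n τ C₁ C₂ M * (W + F) := by
  have hfactor : (C₂ + 1) * W + 2 * F ≤ 2 * (C₂ + 1) * (W + F) := by
    nlinarith [mul_nonneg hC₂ hW, mul_nonneg hC₂ hF]
  calc _ ≤ Real.exp (energyRate n M * (1 + 1 / C₁) * τ) * (2 * (C₂ + 1) * (W + F)) := by gcongr
    _ = _ := by rw [goursatConst]; ring

theorem stmt_11_general {n : ℕ} {t₀ t₁ C₁ C₂ M R s : ℝ} {Λ : NNReal} (hC₁ : 0 < C₁)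
    (hC₂ : 0 ≤ C₂) (hM : 0 ≤ M) {U : Set (ℝ × (Fin n → ℝ))} (hU : IsOpen U)
    (hslab : Icc t₀ t₁ ×ˢ univ ⊆ U) {g : Fin n → Fin n → ℝ × (Fin n → ℝ) → ℝ}
    (hg : ∀ α β, ContDiffOn ℝ 1 (g α β) U)
    (hgs : ∀ p ∈ Icc t₀ t₁ ×ˢ univ, ∀ α β, g α β p = g β α p)
    (hell : ∀ p ∈ Icc t₀ t₁ ×ˢ univ, ∀ ξ : Fin n → ℝ,
      C₁ * ∑ α, ξ α ^ 2 ≤ ∑ α, ∑ β, g α β p * ξ α * ξ β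
        ∧ ∑ α, ∑ β, g α β p * ξ α * ξ β ≤ C₂ * ∑ α, ξ α ^ 2)
    (hgM : ∀ p ∈ Icc t₀ t₁ ×ˢ univ, ∀ α β, |Dt (g α β) p| ≤ M ∧ ∀ μ, |Dx μ (g α β) p| ≤ M)
    {b0 c f v : ℝ × (Fin n → ℝ) → ℝ} {b : Fin n → ℝ × (Fin n → ℝ) → ℝ}
    (hbM : ∀ p ∈ Icc t₀ t₁ ×ˢ univ, |b0 p| ≤ M ∧ (∀ α, |b α p| ≤ M) ∧ |c p| ≤ M)
    (hf : IntegrableOn (fun p => f p ^ 2) (Icc t₀ t₁ ×ˢ univ))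
    {φ : (Fin n → ℝ) → ℝ} (hφ : LipschitzWith Λ φ) (hφt : ∀ x, φ x ∈ Icc t₀ t₁)
    (hchar : ∀ᵐ x, 1 ≤ ∑ α, ∑ β, g α β (φ x, x) * fderiv ℝ φ x (Pi.single α 1)
      * fderiv ℝ φ x (Pi.single β 1))
    (hv : ContDiffOn ℝ 2 v U) (hvR : ∀ t x, R < ‖x‖ → v (t, x) = 0)
    (hpde : ∀ p ∈ Icc t₀ t₁ ×ˢ univ,
      Dt (Dt v) p - (∑ α, ∑ β, g α β p * Dx α (Dx β v) p) + b0 p * Dt v p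
        + (∑ α, b α p * Dx α v p) + c p * v p = f p)
    (hs : s ∈ Icc t₀ t₁) :
    energy g v s ≤ goursatConst n (t₁ - t₀) C₁ C₂ M *
      ((∫ x, (v (φ x, x) ^ 2 + ∑ α, fderiv ℝ (fun y => v (φ y, y)) x (Pi.single α 1) ^ 2))
        + ∫ p in Icc t₀ t₁ ×ˢ univ, f p ^ 2) := by
  have hnhds : ∀ p ∈ Icc t₀ t₁ ×ˢ univ, U ∈ 𝓝 p := fun p hp => hU.mem_nhds (hslab hp)
  have hgraph : ∀ x, (φ x, x) ∈ Icc t₀ t₁ ×ˢ univ := fun x => ⟨hφt x, mem_univ x⟩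
  have hrate : 0 ≤ energyRate n M * (1 + 1 / C₁) := by unfold energyRate; positivity
  have hφ0 : ∀ᵐ x, fderiv ℝ φ x ≠ 0 := hchar.mono fun x hx h0 => by norm_num [h0] at hx
  have hvan : ∀ t x, R < ‖x‖ → v =ᶠ[𝓝 (t, x)] 0 := fun t x =>
    eventuallyEq_zero_of_lt_norm_snd hvR (p := (t, x))
  have hdiv : ∀ t ∈ Icc t₀ t₁, ∀ x, |spaceTimeDiv (energyDensity g v) (energyFlux g v) (t, x)|
      ≤ energyRate n M * (1 + 1 / C₁) * energyDensity g v (t, x) + f (t, x) ^ 2 := fun t ht x => by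
    have hp : (t, x) ∈ Icc t₀ t₁ ×ˢ univ := ⟨ht, mem_univ x⟩
    exact abs_spaceTimeDiv_energy_le hC₁ hM
      (fun α β => ((hg α β).contDiffAt (hnhds _ hp)).differentiableAt one_ne_zero) (hgs _ hp)
      (fun ξ => (hell _ hp ξ).1) (hgM _ hp) (hbM _ hp).1 (hbM _ hp).2.1 (hbM _ hp).2.2
      (hv.contDiffAt (hnhds _ hp)) (hpde _ hp)
  have hflux : ∀ᵐ x, graphFlux (energyDensity g v) (energyFlux g v) φ x
      ≤ (C₂ + 1) * sobolevDensity (fun y => v (φ y, y)) x := by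
    filter_upwards [hchar, hφ.ae_differentiableAt] with x hx hφx
    exact graphFlux_energy_le_sobolevDensity hC₂ (hgs _ (hgraph x))
      (fun ξ => (hell _ (hgraph x) ξ).2) hx
      ((hv.contDiffAt (hnhds _ (hgraph x))).differentiableAt two_ne_zero) hφx
  have hslice := integral_slice_le_of_graphFlux_le_of_contDiffOn hU hslab
    (contDiffOn_energyDensity hU hg hv) (fun t x hx => energyDensity_eq_zero (hvan t x hx))
    (contDiffOn_energyFlux hU hg hv) (fun α t x hx => energyFlux_eq_zero (hvan t x hx) α) hrate
    hdiv (fun p => sq_nonneg (f p)) hf hφ hφt hs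
    (ae_ne_of_ae_fderiv_ne_zero volume hφ.continuous.measurable hφ0 s)
    ((integrable_sobolevDensity_trace hU hslab (hv.of_le one_le_two) hvR hφ hφt).const_mul _)
    (fun x => mul_nonneg (by positivity) (sobolevDensity_nonneg _ x)) hflux
  rw [integral_const_mul] at hslice
  exact hslice.trans <| exp_mul_add_two_mul_le_goursatConst_mul hC₂
    (integral_nonneg fun x => sobolevDensity_nonneg _ x) (integral_nonneg fun p => sq_nonneg (f p))

end Goursat

/-- Goursat-type estimate: for a fully characteristic Lipschitz graph
hypersurface, the energy of a solution at any time is controlled by the `H¹` norm of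
its trace `w(x) = v(φ(x),x)` on the hypersurface and the source, with a constant
depending only on `n, T, C₁, C₂, M, Λ`. -/
theorem stmt_11 (n : ℕ) (hn : 1 ≤ n) (T C₁ C₂ M Λ : ℝ)
    (hT : 0 < T) (hC₁ : 0 < C₁) (hC₂ : 0 < C₂) (hM : 0 < M) (hΛ : 0 < Λ) :
    ∃ C : ℝ, 0 < C ∧
      ∀ (U : Set (ℝ × (Fin n → ℝ))), IsOpen U →
        Set.Icc (-T) T ×ˢ (Set.univ : Set (Fin n → ℝ)) ⊆ U →
      ∀ g : Fin n → Fin n → ℝ × (Fin n → ℝ) → ℝ,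
        (∀ α β, ContDiffOn ℝ 1 (g α β) U) →
        (∀ α β p, g α β p = g β α p) →
        (∀ p ∈ Set.Icc (-T) T ×ˢ (Set.univ : Set (Fin n → ℝ)), ∀ ξ : Fin n → ℝ,
          C₁ * (∑ α, (ξ α) ^ 2) ≤ (∑ α, ∑ β, g α β p * ξ α * ξ β) ∧
          (∑ α, ∑ β, g α β p * ξ α * ξ β) ≤ C₂ * (∑ α, (ξ α) ^ 2)) →
        (∀ α β, ∀ p ∈ Set.Icc (-T) T ×ˢ (Set.univ : Set (Fin n → ℝ)),
          |Dt (g α β) p| ≤ M ∧ ∀ μ, |Dx μ (g α β) p| ≤ M) →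
      ∀ (b0 : ℝ × (Fin n → ℝ) → ℝ) (b : Fin n → ℝ × (Fin n → ℝ) → ℝ)
        (c : ℝ × (Fin n → ℝ) → ℝ),
        Measurable b0 → (∀ α, Measurable (b α)) → Measurable c →
        (∀ p ∈ Set.Icc (-T) T ×ˢ (Set.univ : Set (Fin n → ℝ)),
          |b0 p| ≤ M ∧ (∀ α, |b α p| ≤ M) ∧ |c p| ≤ M) →
      ∀ f : ℝ × (Fin n → ℝ) → ℝ, Continuous f →
        IntegrableOn (fun p => (f p) ^ 2)
          (Set.Icc (-T) T ×ˢ (Set.univ : Set (Fin n → ℝ))) →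
      ∀ φ : (Fin n → ℝ) → ℝ, LipschitzWith (Real.toNNReal Λ) φ →
        (∀ x, -T < φ x ∧ φ x < T) →
        (∀ᵐ x : Fin n → ℝ,
          (∑ α, ∑ β, g α β (φ x, x) * fderiv ℝ φ x (Pi.single α 1)
            * fderiv ℝ φ x (Pi.single β 1)) = 1) →
      ∀ v : ℝ × (Fin n → ℝ) → ℝ, ContDiffOn ℝ 2 v U →
        (∃ R : ℝ, 0 < R ∧ ∀ (t : ℝ) (x : Fin n → ℝ), R ≤ ‖x‖ → v (t, x) = 0) →
        (∀ p ∈ Set.Icc (-T) T ×ˢ (Set.univ : Set (Fin n → ℝ)),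
          Dt (Dt v) p - (∑ α, ∑ β, g α β p * Dx α (Dx β v) p)
            + b0 p * Dt v p + (∑ α, b α p * Dx α v p) + c p * v p = f p) →
      ∀ s ∈ Set.Icc (-T) T,
        energy g v s
          ≤ C * ((∫ x : Fin n → ℝ,
                ((v (φ x, x)) ^ 2
                  + ∑ α, (fderiv ℝ (fun y => v (φ y, y)) x (Pi.single α 1)) ^ 2))
              + ∫ p in Set.Icc (-T) T ×ˢ (Set.univ : Set (Fin n → ℝ)), (f p) ^ 2) := by
  refine ⟨goursatConst n (T - -T) C₁ C₂ M, by unfold goursatConst; positivity, ?_⟩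
  rintro U hU hslab g hg hgs hell hgM b0 b c - - - hbM f - hf φ hφ hφT hchar v hv ⟨R, -, hvR⟩ hpde
    s hs
  exact stmt_11_general hC₁ hC₂.le hM.le hU hslab hg (fun p _ α β => hgs α β p) hell
    (fun p hp α β => hgM α β p hp) hbM hf hφ (fun x => ⟨(hφT x).1.le, (hφT x).2.le⟩)
    (hchar.mono fun _ h => h.ge) hv (fun t x h => hvR t x h.le) hpde hs
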